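/- arXiv:2302.00708 — 2 statements merged into one kernel-verified Lean document; each statement's English description precedes it below -/
import Mathlib

section
/- For every natural number n, the number of 8-regular partitions b_8(n) is odd if and only if 24n + 7 = p^(4a+1) · c² for some prime p, natural number a, and positive integer c with p not dividing c. -/
/-- The number of `m`-regular partitions of `n`, i.e. partitions of `n`
in which no part is divisible by `m`. -/
noncomputable def numRegularPartitions (m n : ℕ) : ℕ :=
  Nat.card {π : n.Partition // ∀ j ∈ π.parts, ¬ m ∣ j}

/-!
Modulo 2 the generating function of `b_8` is `f ^ 7 = f ^ 3 * f ^ 4` with `f = ∏ (1 - X ^ n)`.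
The product formula of Gauss, obtained from a finite identity of Shanks, gives
`f ^ 3 ≡ ∑ X ^ (s * (s + 1) / 2)`, and `f ^ 4` is `f` with `X` replaced by `X ^ 4`. By Euler's
pentagonal number theorem, `b_8(n)` is therefore congruent to the number of natural solutions of
`3 * u ^ 2 + 4 * v ^ 2 = N`, where `N = 24 * n + 7`.

As in Zagier's proof of the two-squares theorem, this number is compared with another one by means
of two involutions on the positive solutions of `3 * x ^ 2 + 4 * y * z = N`. The fixed points of
`y ↔ z` are the representations of `N`. The second involution comes from reflections in
the extended Hecke group `G_6`; its fixed points satisfy `y = x` or `y = 2 * x + z`, where `N` is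
`x * (3 * x + 4 * z)` or `(x + 2 * z) * (3 * x + 2 * z)`, and so correspond to the factorisations
`N = u * v` with `u < v`. Hence `b_8(n)` is odd exactly when `N` has `2` modulo `4` divisors.
-/

/-! ### Parity of fixed points and divisor counts -/

section Divisors

open Finset

theorem card_modEq_card_filter_fixed {α : Type*} [DecidableEq α] {s : Finset α} {f : α → α}
    (hmaps : ∀ a ∈ s, f a ∈ s) (hinv : ∀ a ∈ s, f (f a) = a) :
    #s ≡ #{a ∈ s | f a = a} [MOD 2] := by
  have hmoved : ((#{a ∈ s | f a ≠ a} : ℕ) : ZMod 2) = 0 := by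
    rw [card_eq_sum_ones, Nat.cast_sum]
    refine sum_involution (fun a _ ↦ f a) (fun _ _ ↦ by decide)
      (fun a ha _ ↦ (mem_filter.1 ha).2) (fun a ha ↦ ?_)
      (fun a ha ↦ hinv a (mem_filter.1 ha).1)
    obtain ⟨has, hne⟩ := mem_filter.1 ha
    exact mem_filter.2 ⟨hmaps a has, by rw [hinv a has]; exact hne.symm⟩
  rw [← ZMod.natCast_eq_natCast_iff, ← card_filter_add_card_filter_not (s := s) (fun a ↦ f a = a),
    Nat.cast_add, hmoved, add_zero]

theorem card_divisors_eq_two_mul_add (n : ℕ) :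
    #n.divisors = 2 * #{w ∈ n.divisorsAntidiagonal | w.1 < w.2} +
      #{w ∈ n.divisorsAntidiagonal | w.1 = w.2} := by
  have hswap : #{w ∈ n.divisorsAntidiagonal | w.2 < w.1} =
      #{w ∈ n.divisorsAntidiagonal | w.1 < w.2} := by
    refine card_nbij' Prod.swap Prod.swap ?_ ?_ (fun _ _ ↦ rfl) (fun _ _ ↦ rfl) <;>
      intro w hw <;> simpa [mul_comm] using hw
  have htotal : #n.divisorsAntidiagonal = #n.divisors := by
    rw [← Nat.map_div_right_divisors, card_map]
  rw [← htotal, ← card_filter_add_card_filter_not (fun w : ℕ × ℕ ↦ w.1 < w.2), two_mul, add_assoc]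
  congr 1
  rw [← hswap, ← card_filter_add_card_filter_not (fun w : ℕ × ℕ ↦ w.2 < w.1), filter_filter,
    filter_filter]
  congr 2 <;> ext w <;> simp only [mem_filter] <;> grind

theorem card_divisorsAntidiagonal_filter_eq {n : ℕ} (hn : n ≠ 0) :
    #{w ∈ n.divisorsAntidiagonal | w.1 = w.2} = if IsSquare n then 1 else 0 := by
  split_ifs with hsq
  · obtain ⟨r, rfl⟩ := hsq
    refine card_eq_one.2 ⟨(r, r), ?_⟩
    ext ⟨a, b⟩
    simp only [mem_filter, Nat.mem_divisorsAntidiagonal, mem_singleton, Prod.mk.injEq]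
    constructor
    · rintro ⟨⟨h, -⟩, rfl⟩
      exact ⟨Nat.mul_self_inj.1 h, Nat.mul_self_inj.1 h⟩
    · rintro ⟨rfl, rfl⟩
      exact ⟨⟨rfl, hn⟩, rfl⟩
  · refine card_eq_zero.2 (filter_eq_empty_iff.2 ?_)
    rintro ⟨a, b⟩ hab (rfl : a = b)
    exact hsq ⟨a, (Nat.mem_divisorsAntidiagonal.1 hab).1.symm⟩

theorem odd_card_divisors_iff_isSquare {n : ℕ} (hn : n ≠ 0) :
    Odd #n.divisors ↔ IsSquare n := by
  rw [card_divisors_eq_two_mul_add, card_divisorsAntidiagonal_filter_eq hn]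
  split_ifs with hsq <;> simp [hsq]

theorem mul_mod_four_eq_two_iff {a b : ℕ} (hb : Odd b) : a * b % 4 = 2 ↔ a % 4 = 2 := by
  rw [Nat.mul_mod]
  have hb4 : b % 4 = 1 ∨ b % 4 = 3 := by grind
  have ha4 := Nat.mod_lt a (show 0 < 4 by norm_num)
  rcases hb4 with h | h <;> rw [h] <;> omega

theorem card_divisors_prime_pow_mul {p e m : ℕ} (hp : p.Prime) (hpm : ¬ p ∣ m) :
    #(p ^ e * m).divisors = (e + 1) * #m.divisors := by
  have hcop : (p ^ e).Coprime m := (hp.coprime_iff_not_dvd.2 hpm).pow_left e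
  rw [hcop.card_divisors_mul, Nat.divisors_prime_pow hp, card_map, card_range]

theorem card_divisors_mod_four_eq_two_iff {n : ℕ} (hn : n ≠ 0) :
    #n.divisors % 4 = 2 ↔
      ∃ p a c : ℕ, p.Prime ∧ 0 < c ∧ ¬ p ∣ c ∧ n = p ^ (4 * a + 1) * c ^ 2 := by
  constructor
  · intro h
    obtain ⟨p, hpn, heven⟩ : ∃ p ∈ n.primeFactors, 2 ∣ n.factorization p + 1 := by
      rw [← Nat.prime_two.prime.dvd_finsetProd_iff, ← Nat.card_divisors hn]
      omega
    have hp := Nat.prime_of_mem_primeFactors hpn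
    obtain ⟨e, m, hpm, rfl⟩ := Nat.exists_eq_pow_mul_and_not_dvd hn p hp.ne_one
    have hm : m ≠ 0 := right_ne_zero_of_mul hn
    rw [Nat.factorization_mul (pow_ne_zero e hp.ne_zero) hm, Finsupp.add_apply,
      hp.factorization_pow, Finsupp.single_eq_same, Nat.factorization_eq_zero_of_not_dvd hpm,
      add_zero] at heven
    rw [card_divisors_prime_pow_mul hp hpm] at h
    have hodd : Odd #m.divisors := by
      by_contra hne
      have := mul_dvd_mul heven (even_iff_two_dvd.1 (Nat.not_odd_iff_even.1 hne))
      omega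
    rw [mul_mod_four_eq_two_iff hodd] at h
    obtain ⟨c, rfl⟩ := (isSquare_iff_exists_sq m).1 ((odd_card_divisors_iff_isSquare hm).1 hodd)
    refine ⟨p, e / 4, c, hp, Nat.pos_of_ne_zero (pow_ne_zero_iff two_ne_zero |>.1 hm),
      fun hpc ↦ hpm (dvd_pow hpc two_ne_zero), ?_⟩
    rw [show 4 * (e / 4) + 1 = e by omega]
  · rintro ⟨p, a, c, hp, hc, hpc, rfl⟩
    rw [card_divisors_prime_pow_mul hp (mt hp.dvd_of_dvd_pow hpc), mul_mod_four_eq_two_iff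
      ((odd_card_divisors_iff_isSquare (pow_ne_zero 2 hc.ne')).2 (IsSquare.sq c))]
    omega

end Divisors

/-! ### The generating function modulo 2 -/

section GeneratingFunction

open PowerSeries PowerSeries.WithPiTopology Filter Topology Finset

theorem numRegularPartitions_eq_card_countRestricted {m : ℕ} (hm : 0 < m) (n : ℕ) :
    numRegularPartitions m n = #(Nat.Partition.countRestricted n m) := by
  classical
  rw [← Nat.Partition.card_restricted_eq_card_countRestricted n hm, numRegularPartitions,
    Nat.card_eq_fintype_card, Fintype.card_subtype, Nat.Partition.restricted]

theorem sum_range_pow_eq_one_sub_pow {R : Type*} [CommRing R] {p : ℕ} [Fact p.Prime] [CharP R p]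
    {x : R} (hx : IsUnit (1 - x)) (k : ℕ) :
    ∑ j ∈ range (p ^ k), x ^ j = (1 - x) ^ (p ^ k - 1) := by
  have hpk : p ^ k ≠ 0 := pow_ne_zero k (Fact.out : p.Prime).ne_zero
  rw [← hx.mul_left_inj, geom_sum_mul_neg, pow_sub_one_mul hpk, sub_pow_char_pow, one_pow]

theorem isUnit_one_sub_X_pow {R : Type*} [CommRing R] {n : ℕ} (hn : n ≠ 0) :
    IsUnit (1 - X ^ n : R⟦X⟧) := by
  simp [isUnit_iff_constantCoeff, hn]

theorem mk_numRegularPartitions_prime_pow (R : Type*) [CommRing R] (p k : ℕ) [Fact p.Prime]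
    [CharP R p] :
    (PowerSeries.mk fun n ↦ (numRegularPartitions (p ^ k) n : R)) =
      pentagonalSeries R ^ (p ^ k - 1) := by
  let _ : TopologicalSpace R := ⊥
  have _ : DiscreteTopology R := ⟨rfl⟩
  have _ : CharP R⟦X⟧ p := charP_of_injective_ringHom (C_injective (R := R)) p
  have hpk : 0 < p ^ k := pow_pos (Fact.out : p.Prime).pos k
  have hfactor (i : ℕ) : ∑ j ∈ range (p ^ k), (X : R⟦X⟧) ^ ((i + 1) * j) =
      (1 - X ^ (i + 1)) ^ (p ^ k - 1) := by
    simp only [pow_mul]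
    exact sum_range_pow_eq_one_sub_pow (isUnit_one_sub_X_pow i.succ_ne_zero) k
  have hprod := Nat.Partition.hasProd_powerSeriesMk_card_countRestricted R hpk
  simp only [hfactor, ← numRegularPartitions_eq_card_countRestricted hpk] at hprod
  exact hprod.unique ((hasProd_one_sub_X_pow R).pow _)

theorem expand_eq_pow_of_zmod {p : ℕ} [Fact p.Prime] (f : (ZMod p)⟦X⟧) :
    expand p (Fact.out : p.Prime).ne_zero f = f ^ p := by
  refine Eq.trans ?_ (MvPowerSeries.map_frobenius_expand p (Fact.out : p.Prime).ne_zero (f := f))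
  rw [ZMod.frobenius_zmod, MvPowerSeries.map_id]
  rfl

theorem isSquare_eight_mul_add_one_iff {n : ℕ} :
    IsSquare (8 * n + 1) ↔ ∃ s, s * (s + 1) / 2 = n := by
  have hdouble (s : ℕ) : 2 * (s * (s + 1) / 2) = s * (s + 1) :=
    Nat.two_mul_div_two_of_even (Nat.even_mul_succ_self s)
  constructor
  · rintro ⟨r, hr⟩
    have hodd : Odd (r * r) := hr ▸ ⟨4 * n, by ring⟩
    obtain ⟨s, rfl⟩ := (Nat.odd_mul.1 hodd).1
    exact ⟨s, by linarith [hdouble s]⟩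
  · rintro ⟨s, rfl⟩
    exact ⟨2 * s + 1, by linarith [hdouble s]⟩

theorem isSquare_twentyfour_mul_add_one_iff {n : ℕ} :
    IsSquare (24 * n + 1) ↔ n ∈ Set.range pentagonal := by
  have hsq (k : ℤ) : 24 * (pentagonal k : ℤ) + 1 = (6 * k - 1) ^ 2 := by
    linear_combination 12 * two_mul_natCast_pentagonal k
  constructor
  · rintro ⟨r, hr⟩
    have hsq_mod : r * r % 6 = 1 := by omega
    have hr_mod : r % 6 = 1 ∨ r % 6 = 5 := by
      have hlt := Nat.mod_lt r (show 6 > 0 by norm_num)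
      rw [Nat.mul_mod] at hsq_mod
      interval_cases r % 6 <;> simp_all
    obtain ⟨k, hk⟩ : ∃ k : ℤ, (6 * k - 1) ^ 2 = (r : ℤ) ^ 2 := by
      rcases hr_mod with h | h
      · exact ⟨-(r / 6 : ℕ), by rw [← neg_sq, show -(6 * -(↑(r / 6) : ℤ) - 1) = r by omega]⟩
      · exact ⟨(r / 6 : ℕ) + 1, by rw [show 6 * ((↑(r / 6) : ℤ) + 1) - 1 = r by omega]⟩
    zify at hr
    exact ⟨k, by linarith [hsq k]⟩
  · rintro ⟨k, rfl⟩
    refine ⟨(6 * k - 1).natAbs, ?_⟩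
    zify
    rw [abs_mul_abs_self, hsq, sq]

/-- Ramanujan's theta function `ψ = ∑ s, X ^ (s * (s + 1) / 2)`. A number `n` is triangular exactly
when `8 * n + 1` is a square, which makes the coefficients decidable. -/
def triangularSeries (R : Type*) [CommRing R] : R⟦X⟧ :=
  PowerSeries.mk fun n ↦ if IsSquare (8 * n + 1) then 1 else 0

section Shanks
variable {R : Type*} [CommRing R] (x : R) (u : ℕ → R)

/-- The partial products of Gauss's product `∏ i, (1 - x ^ (2 * i + 2)) / (1 - x ^ (2 * i + 1))`;
`u i` plays the role of the inverse of `1 - x ^ (2 * i + 1)`. -/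
def gaussProd (m n : ℕ) : R :=
  ∏ i ∈ Ico m n, (1 - x ^ (2 * i + 2)) * u i

variable {x u}

theorem sum_gaussProd_succ (hu : ∀ i, (1 - x ^ (2 * i + 1)) * u i = 1) {m n : ℕ} (hmn : m ≤ n) :
    ∑ s ∈ range m, gaussProd x u s (n + 1) * x ^ (s * (2 * n + 3)) =
      ∑ s ∈ range m, gaussProd x u s n * x ^ (s * (2 * n + 1)) +
        gaussProd x u m n * (1 - x ^ (2 * m)) * x ^ (m * (2 * n + 1)) * u n := by
  induction m with
  | zero => simp
  | succ m ih =>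
    have hlast : gaussProd x u m (n + 1) = gaussProd x u m n * ((1 - x ^ (2 * n + 2)) * u n) :=
      prod_Ico_succ_top (by omega) _
    have hfirst : gaussProd x u m n = (1 - x ^ (2 * m + 2)) * u m * gaussProd x u (m + 1) n :=
      prod_eq_prod_Ico_succ_bot (by omega) _
    rw [sum_range_succ, sum_range_succ, ih (by omega), hlast, hfirst]
    linear_combination (gaussProd x u (m + 1) n * (1 - x ^ (2 * m + 2)) *
      x ^ (m * (2 * n + 1))) * (u m * hu n + x ^ (2 * n + 1) * u n * hu m)

/- Shanks's finite form of Gauss's identity: modulo `x ^ (2 * n + 1)` only the term `s = 0` of the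
left-hand side survives. -/
theorem sum_gaussProd_eq_sum_pow_triangular (hu : ∀ i, (1 - x ^ (2 * i + 1)) * u i = 1) (n : ℕ) :
    ∑ s ∈ range n, gaussProd x u s n * x ^ (s * (2 * n + 1)) =
      ∑ s ∈ range (2 * n), x ^ (s * (s + 1) / 2) := by
  induction n with
  | zero => simp
  | succ n ih =>
    have heven : 2 * n * (2 * n + 1) / 2 = n * (2 * n + 1) := by
      rw [mul_assoc, Nat.mul_div_cancel_left _ two_pos]
    have hodd : (2 * n + 1) * (2 * n + 1 + 1) / 2 = (n + 1) * (2 * n + 1) := by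
      rw [show (2 * n + 1) * (2 * n + 1 + 1) = 2 * ((n + 1) * (2 * n + 1)) by ring,
        Nat.mul_div_cancel_left _ two_pos]
    rw [show 2 * (n + 1) = 2 * n + 1 + 1 by ring, sum_range_succ _ (2 * n + 1),
      sum_range_succ _ (2 * n), ← ih, heven, hodd, sum_range_succ, sum_gaussProd_succ hu le_rfl]
    simp only [gaussProd, Ico_self, prod_empty, Nat.Ico_succ_singleton, prod_singleton]
    linear_combination (x ^ (n * (2 * n + 1)) * (1 + x ^ (2 * n + 1))) * hu n

theorem gaussProd_mul_prod_range (hu : ∀ i, (1 - x ^ (2 * i + 1)) * u i = 1) (n : ℕ) :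
    gaussProd x u 0 n * ∏ i ∈ range (2 * n), (1 - x ^ (i + 1)) =
      (∏ i ∈ range n, (1 - x ^ (2 * (i + 1)))) ^ 2 := by
  induction n with
  | zero => simp [gaussProd]
  | succ n ih =>
    rw [gaussProd, prod_Ico_succ_top n.zero_le, ← gaussProd,
      show 2 * (n + 1) = 2 * n + 1 + 1 by ring,
      prod_range_succ _ (2 * n + 1), prod_range_succ _ (2 * n), prod_range_succ _ n, mul_pow, ← ih]
    linear_combination (gaussProd x u 0 n * (∏ i ∈ range (2 * n), (1 - x ^ (i + 1))) *
      (1 - x ^ (2 * n + 2)) ^ 2) * hu n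

end Shanks

theorem coeff_sum_X_pow_triangular (R : Type*) [CommRing R] {d m : ℕ} (hd : d < m) :
    coeff d (∑ s ∈ range m, (X : R⟦X⟧) ^ (s * (s + 1) / 2)) = coeff d (triangularSeries R) := by
  have hmono : StrictMono fun s : ℕ ↦ s * (s + 1) / 2 := by
    refine strictMono_nat_of_lt_succ fun s ↦ ?_
    rw [show (s + 1) * (s + 1 + 1) = s * (s + 1) + (s + 1) * 2 by ring,
      Nat.add_mul_div_right _ _ two_pos]
    omega
  simp only [map_sum, coeff_X_pow, triangularSeries, coeff_mk]
  split_ifs with hsq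
  · obtain ⟨t, rfl⟩ := isSquare_eight_mul_add_one_iff.1 hsq
    simp [hmono.injective.eq_iff, hmono.le_apply.trans_lt hd]
  · exact sum_eq_zero fun s _ ↦ if_neg fun h ↦ hsq (isSquare_eight_mul_add_one_iff.2 ⟨s, h.symm⟩)

theorem coeff_gaussProd {R : Type*} [CommRing R] {u : ℕ → R⟦X⟧}
    (hu : ∀ i, (1 - X ^ (2 * i + 1)) * u i = 1) {d n : ℕ} (hd : d < n) :
    coeff d (gaussProd X u 0 n) = coeff d (triangularSeries R) := by
  rw [← coeff_sum_X_pow_triangular R (show d < 2 * n by omega),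
    ← sum_gaussProd_eq_sum_pow_triangular hu, map_sum,
    sum_eq_single_of_mem 0 (mem_range.2 (by omega)), zero_mul, pow_zero, mul_one]
  intro s _ hs
  have hdeg : 2 * n + 1 ≤ s * (2 * n + 1) := Nat.le_mul_of_pos_left _ (by omega)
  rw [coeff_mul_X_pow', if_neg (by omega)]

theorem continuous_expand (R : Type*) [CommRing R] [TopologicalSpace R] {p : ℕ} (hp : p ≠ 0) :
    Continuous fun f : R⟦X⟧ ↦ expand p hp f := by
  refine continuous_iff_continuousAt.2 fun f ↦ (tendsto_iff_coeff_tendsto ..).2 fun d ↦ ?_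
  simp only [coeff_expand]
  split_ifs
  · exact (continuous_coeff R _).continuousAt
  · exact tendsto_const_nhds

theorem triangularSeries_mul_pentagonalSeries (R : Type*) [CommRing R] :
    triangularSeries R * pentagonalSeries R = expand 2 two_ne_zero (pentagonalSeries R) ^ 2 := by
  let _ : TopologicalSpace R := ⊥
  have _ : DiscreteTopology R := ⟨rfl⟩
  choose u hu using fun i : ℕ ↦
    (isUnit_one_sub_X_pow (R := R) (2 * i).succ_ne_zero).exists_right_inv
  have hpentagonal : Tendsto (fun n ↦ ∏ i ∈ range n, (1 - X ^ (i + 1) : R⟦X⟧)) atTop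
      (𝓝 (pentagonalSeries R)) := (hasProd_one_sub_X_pow R).tendsto_prod_nat
  have htriangular : Tendsto (fun n ↦ gaussProd X u 0 n) atTop (𝓝 (triangularSeries R)) :=
    (tendsto_iff_coeff_tendsto ..).2 fun d ↦
      tendsto_atTop_of_eventually_const (i₀ := d + 1) fun n hn ↦ coeff_gaussProd hu hn
  have hexpand : Tendsto (fun n ↦ ∏ i ∈ range n, (1 - X ^ (2 * (i + 1)) : R⟦X⟧)) atTop
      (𝓝 (expand 2 two_ne_zero (pentagonalSeries R))) := by
    have hcomp := ((continuous_expand R two_ne_zero).tendsto _).comp hpentagonal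
    simpa [Function.comp_def, pow_mul] using hcomp
  refine tendsto_nhds_unique
    (htriangular.mul (hpentagonal.comp (tendsto_id.const_mul_atTop' two_pos))) ?_
  simpa only [Function.comp_apply, id, gaussProd_mul_prod_range hu] using hexpand.pow 2

theorem pentagonalSeries_pow_three : pentagonalSeries (ZMod 2) ^ 3 = triangularSeries (ZMod 2) := by
  have hunit : IsUnit (pentagonalSeries (ZMod 2)) := by
    rw [isUnit_iff_constantCoeff, ← coeff_zero_eq_constantCoeff_apply, isUnit_iff_ne_zero, Ne,
      coeff_pentagonalSeries_eq_zero_iff, not_not]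
    exact ⟨0, rfl⟩
  rw [← hunit.mul_left_inj, triangularSeries_mul_pentagonalSeries, expand_eq_pow_of_zmod]
  ring

theorem coeff_pentagonalSeries_zmod_two (n : ℕ) :
    coeff n (pentagonalSeries (ZMod 2)) = if IsSquare (24 * n + 1) then 1 else 0 := by
  have hbit : ∀ a b : ZMod 2, (a = 0 ↔ b = 0) → a = b := by decide
  exact hbit _ _ (by simp [coeff_pentagonalSeries_eq_zero_iff, isSquare_twentyfour_mul_add_one_iff])

theorem four_dvd_of_isSquare_six_mul_add_one {n : ℕ} (h : IsSquare (6 * n + 1)) : 4 ∣ n := by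
  obtain ⟨r, hr⟩ := h
  have hodd : Odd (r * r) := hr ▸ ⟨3 * n, by ring⟩
  have := Nat.eight_dvd_sq_sub_one_of_odd (Nat.odd_mul.1 hodd).1
  rw [sq, ← hr] at this
  omega

theorem coeff_pentagonalSeries_pow_four (n : ℕ) :
    coeff n (pentagonalSeries (ZMod 2) ^ 4) = if IsSquare (6 * n + 1) then 1 else 0 := by
  have hexpand : pentagonalSeries (ZMod 2) ^ 4 =
      expand 2 two_ne_zero (expand 2 two_ne_zero (pentagonalSeries (ZMod 2))) := by
    simp only [expand_eq_pow_of_zmod]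
    ring
  rw [hexpand, ← expand_mul, coeff_expand]
  by_cases hdvd : 2 * 2 ∣ n
  · obtain ⟨j, rfl⟩ := hdvd
    rw [if_pos (dvd_mul_right ..), Nat.mul_div_cancel_left _ (by norm_num),
      coeff_pentagonalSeries_zmod_two, show 6 * (2 * 2 * j) + 1 = 24 * j + 1 by ring]
  · rw [if_neg hdvd, if_neg (mt four_dvd_of_isSquare_six_mul_add_one hdvd)]

/-- The representations of `N` by the quadratic form `3 * u ^ 2 + 4 * v ^ 2` in natural numbers. -/
def formReps (N : ℕ) : Finset (ℕ × ℕ) :=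
  {w ∈ range (N + 1) ×ˢ range (N + 1) | 3 * w.1 ^ 2 + 4 * w.2 ^ 2 = N}

theorem mem_formReps {N u v : ℕ} : (u, v) ∈ formReps N ↔ 3 * u ^ 2 + 4 * v ^ 2 = N := by
  simp only [formReps, mem_filter, mem_product, mem_range, and_iff_right_iff_imp]
  exact fun h ↦ ⟨by nlinarith, by nlinarith⟩

theorem mem_formReps_iff_exists_add_eq {n u v : ℕ} :
    (u, v) ∈ formReps (24 * n + 7) ↔
      ∃ i j, i + j = n ∧ u * u = 8 * i + 1 ∧ v * v = 6 * j + 1 := by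
  rw [mem_formReps, sq, sq]
  constructor
  · intro h
    have hodd : Odd (3 * (u * u)) := by
      rw [Nat.odd_iff]
      omega
    have hdvd := Nat.eight_dvd_sq_sub_one_of_odd (Nat.odd_mul.1 (Nat.odd_mul.1 hodd).2).1
    rw [sq] at hdvd
    exact ⟨u * u / 8, v * v / 6, by omega, by omega, by omega⟩
  · rintro ⟨i, j, rfl, hu, hv⟩
    omega

theorem card_formReps_eq_card_antidiagonal_filter (n : ℕ) :
    #(formReps (24 * n + 7)) =
      #{w ∈ antidiagonal n | IsSquare (8 * w.1 + 1) ∧ IsSquare (6 * w.2 + 1)} := by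
  refine card_bij' (fun w _ ↦ (w.1 * w.1 / 8, w.2 * w.2 / 6))
    (fun w _ ↦ ((8 * w.1 + 1).sqrt, (6 * w.2 + 1).sqrt)) ?_ ?_ ?_ ?_
  · rintro ⟨u, v⟩ huv
    obtain ⟨i, j, hij, hu, hv⟩ := mem_formReps_iff_exists_add_eq.1 huv
    rw [mem_filter, HasAntidiagonal.mem_antidiagonal]
    exact ⟨by dsimp only; omega, ⟨u, by dsimp only; omega⟩, ⟨v, by dsimp only; omega⟩⟩
  · rintro ⟨i, j⟩ hij
    obtain ⟨hij, ⟨u, hu⟩, ⟨v, hv⟩⟩ := mem_filter.1 hij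
    rw [HasAntidiagonal.mem_antidiagonal] at hij
    dsimp only at hu hv ⊢
    rw [hu, hv, Nat.sqrt_eq, Nat.sqrt_eq, mem_formReps_iff_exists_add_eq]
    exact ⟨i, j, hij, hu.symm, hv.symm⟩
  · rintro ⟨u, v⟩ huv
    obtain ⟨i, j, hij, hu, hv⟩ := mem_formReps_iff_exists_add_eq.1 huv
    dsimp only
    rw [show 8 * (u * u / 8) + 1 = u * u by omega, show 6 * (v * v / 6) + 1 = v * v by omega,
      Nat.sqrt_eq, Nat.sqrt_eq]
  · rintro ⟨i, j⟩ hij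
    obtain ⟨-, ⟨u, hu⟩, ⟨v, hv⟩⟩ := mem_filter.1 hij
    dsimp only at hu hv ⊢
    rw [hu, hv, Nat.sqrt_eq, Nat.sqrt_eq, ← hu, ← hv]
    simp only [Prod.mk.injEq]
    omega

theorem natCast_numRegularPartitions_eight (n : ℕ) :
    (numRegularPartitions 8 n : ZMod 2) = #(formReps (24 * n + 7)) := by
  have hseries := congrArg (coeff n) (mk_numRegularPartitions_prime_pow (ZMod 2) 2 3)
  rw [coeff_mk, show pentagonalSeries (ZMod 2) ^ (2 ^ 3 - 1) =
    pentagonalSeries (ZMod 2) ^ 3 * pentagonalSeries (ZMod 2) ^ 4 by ring,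
    pentagonalSeries_pow_three, coeff_mul] at hseries
  simp only [triangularSeries, coeff_mk, coeff_pentagonalSeries_pow_four, ite_zero_mul_ite_zero,
    mul_one, sum_boole, ← card_formReps_eq_card_antidiagonal_filter] at hseries
  exact hseries

end GeneratingFunction

/-! ### The involution on triples -/

section Involution

open Finset

/-- The triple `t = (x, y, z)` satisfies `3 * x ^ 2 + 4 * y * z = N` with `y` and `z` positive. It
encodes the quadratic `y - √3 * x * T - z * T ^ 2` of discriminant `N`, whose two real roots have
opposite signs. -/
structure IsFormTriple (N : ℕ) (t : ℤ × ℤ × ℤ) : Prop where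
  snd_pos : 0 < t.2.1
  trd_pos : 0 < t.2.2
  eq : 3 * t.1 ^ 2 + 4 * (t.2.1 * t.2.2) = N

/-- The effect on triples of inverting the variable `T` of the quadratic and changing the sign. -/
def invert (t : ℤ × ℤ × ℤ) : ℤ × ℤ × ℤ :=
  (-t.1, t.2.2, t.2.1)

/-- The reflection acting on triples that moves the positive root of the quadratic to the negative
half-line and the negative root to the positive one. The cusps `0, 1/√3, √3/2, 2/√3, √3, ∞` of the
Hecke group `G_6` cut the positive half-line into five intervals; the five cases, from `(√3, ∞)`
down to `(0, 1/√3)`, apply the reflection that exchanges the interval of the positive root with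
`(-∞, 0)`. No root is a cusp when `3` does not divide `y * z`. -/
def hexReflect : ℤ × ℤ × ℤ → ℤ × ℤ × ℤ
  | (x, y, z) =>
    if 3 * x + 3 * z < y then (-x - 2 * z, y - 3 * x - 3 * z, z)
    else if 6 * x + 4 * z < 3 * y then
      (-5 * x + 2 * y - 4 * z, 3 * y - 6 * x - 4 * z, 3 * x + 3 * z - y)
    else if 6 * x + 3 * z < 4 * y then
      (-7 * x + 4 * y - 4 * z, -6 * x + 4 * y - 3 * z, 6 * x - 3 * y + 4 * z)
    else if 3 * x + z < 3 * y then
      (-5 * x + 4 * y - 2 * z, 3 * y - 3 * x - z, 6 * x + 3 * z - 4 * y)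
    else (2 * y - x, y, z + 3 * x - 3 * y)

/-- The representative of `t` modulo `invert` with positive first entry, provided that entry is not
zero. -/
def orient (t : ℤ × ℤ × ℤ) : ℤ × ℤ × ℤ :=
  if 0 < t.1 then t else invert t

/-- The map induced by `hexReflect`, which commutes with `invert`, on the triples with positive
first entry: the analogue of Zagier's involution. -/
def hexInvolution (t : ℤ × ℤ × ℤ) : ℤ × ℤ × ℤ :=
  orient (hexReflect t)

section IsFormTriple

variable {N : ℕ} {t : ℤ × ℤ × ℤ}

theorem IsFormTriple.odd_fst (ht : IsFormTriple N t) (hN : N % 4 = 3) : Odd t.1 := by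
  have hodd : Odd (3 * t.1 ^ 2) := by
    rw [Int.odd_iff]
    have := ht.eq
    omega
  exact (Int.odd_pow' two_ne_zero).1 (Int.odd_mul.1 hodd).2

theorem IsFormTriple.snd_modEq_trd (ht : IsFormTriple N t) (hN : N % 3 = 1) :
    t.2.1 ≡ t.2.2 [ZMOD 3] := by
  have hmul : t.2.1 * t.2.2 ≡ 1 [ZMOD 3] := by
    have := ht.eq
    rw [Int.ModEq]
    omega
  have hcancel : ∀ a b : ZMod 3, a * b = 1 → a = b := by decide
  refine (ZMod.intCast_eq_intCast_iff _ _ 3).1 (hcancel _ _ ?_)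
  exact_mod_cast (ZMod.intCast_eq_intCast_iff _ _ 3).2 hmul

theorem IsFormTriple.not_three_dvd_trd (ht : IsFormTriple N t) (hN : N % 3 = 1) :
    ¬ 3 ∣ t.2.2 := by
  intro h
  have := h.mul_left t.2.1
  have := ht.eq
  omega

protected theorem IsFormTriple.invert (ht : IsFormTriple N t) : IsFormTriple N (invert t) :=
  ⟨ht.trd_pos, ht.snd_pos, by rw [← ht.eq, invert]; ring⟩

protected theorem IsFormTriple.orient (ht : IsFormTriple N t) : IsFormTriple N (orient t) := by
  rw [orient]
  split_ifs
  exacts [ht, ht.invert]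

protected theorem IsFormTriple.hexReflect (ht : IsFormTriple N t) (hN : N % 3 = 1) :
    IsFormTriple N (hexReflect t) := by
  obtain ⟨x, y, z⟩ := t
  have hyz : y % 3 = z % 3 := ht.snd_modEq_trd hN
  have hz := ht.not_three_dvd_trd hN
  obtain ⟨hy_pos, hz_pos, heq⟩ := ht
  dsimp only at *
  rw [hexReflect]
  split_ifs <;> exact ⟨by dsimp only; omega, by dsimp only; omega, by rw [← heq]; ring⟩

theorem hexReflect_hexReflect (ht : IsFormTriple N t) (hN : N % 3 = 1) :
    hexReflect (hexReflect t) = t := by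
  obtain ⟨x, y, z⟩ := t
  have hyz : y % 3 = z % 3 := ht.snd_modEq_trd hN
  obtain ⟨hy_pos, hz_pos, -⟩ := ht
  dsimp only at *
  simp only [hexReflect]
  split_ifs <;> simp only [Prod.mk.injEq, and_true, true_and] <;> omega

theorem hexReflect_invert (ht : IsFormTriple N t) (hN : N % 3 = 1) :
    hexReflect (invert t) = invert (hexReflect t) := by
  obtain ⟨x, y, z⟩ := t
  have hyz : y % 3 = z % 3 := ht.snd_modEq_trd hN
  have hz := ht.not_three_dvd_trd hN
  obtain ⟨hy_pos, hz_pos, -⟩ := ht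
  dsimp only at *
  change hexReflect (-x, z, y) = _
  simp only [hexReflect, apply_ite invert]
  simp only [invert]
  split_ifs <;> simp only [Prod.mk.injEq, and_true, true_and] <;> omega

theorem orient_eq_iff {s : ℤ × ℤ × ℤ} (ht : 0 < t.1) : orient s = t ↔ s = t ∨ s = invert t := by
  obtain ⟨a, b, c⟩ := s
  obtain ⟨x, y, z⟩ := t
  dsimp only at ht
  simp only [orient, invert]
  split_ifs <;> simp only [Prod.mk.injEq] <;> omega

theorem fst_orient_pos (ht : t.1 ≠ 0) : 0 < (orient t).1 := by
  rw [orient]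
  split_ifs with h
  · exact h
  · simp only [invert]
    omega

theorem hexInvolution_hexInvolution (ht : IsFormTriple N t) (hN : N % 3 = 1) (hpos : 0 < t.1) :
    hexInvolution (hexInvolution t) = t := by
  rw [hexInvolution, orient_eq_iff hpos, hexInvolution, orient]
  split_ifs
  · exact .inl (hexReflect_hexReflect ht hN)
  · right
    rw [hexReflect_invert (ht.hexReflect hN) hN, hexReflect_hexReflect ht hN]

theorem hexInvolution_eq_self_iff (ht : IsFormTriple N t) (hN : N % 12 = 7) (hpos : 0 < t.1) :
    hexInvolution t = t ↔ t.1 = t.2.1 ∨ t.2.1 = 2 * t.1 + t.2.2 := by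
  rw [hexInvolution, orient_eq_iff hpos]
  obtain ⟨x, y, z⟩ := t
  have hx := Int.odd_iff.1 (ht.odd_fst (by omega))
  have hyz : y % 3 = z % 3 := ht.snd_modEq_trd (by omega)
  have hz := ht.not_three_dvd_trd (by omega)
  obtain ⟨hy_pos, hz_pos, -⟩ := ht
  dsimp only at *
  simp only [hexReflect, invert]
  split_ifs <;> simp only [Prod.mk.injEq, and_true, true_and] <;> omega

end IsFormTriple

/-- The finite set of triples `t` of positive integers with `IsFormTriple N t`. -/
noncomputable def formTriples (N : ℕ) : Finset (ℤ × ℤ × ℤ) :=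
  {t ∈ Icc 1 (N : ℤ) ×ˢ Icc 1 (N : ℤ) ×ˢ Icc 1 (N : ℤ) | 3 * t.1 ^ 2 + 4 * (t.2.1 * t.2.2) = N}

theorem mem_formTriples {N : ℕ} {t : ℤ × ℤ × ℤ} :
    t ∈ formTriples N ↔ 0 < t.1 ∧ IsFormTriple N t := by
  simp only [formTriples, mem_filter, mem_product, mem_Icc]
  constructor
  · rintro ⟨⟨hx, hy, hz⟩, h⟩
    exact ⟨hx.1, hy.1, hz.1, h⟩
  · rintro ⟨hx, hy, hz, h⟩
    have := mul_pos hy hz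
    exact ⟨⟨⟨hx, by nlinarith⟩, ⟨hy, by nlinarith⟩, ⟨hz, by nlinarith⟩⟩, h⟩

theorem hexInvolution_mem_formTriples {N : ℕ} (hN : N % 12 = 7) {t : ℤ × ℤ × ℤ}
    (ht : t ∈ formTriples N) : hexInvolution t ∈ formTriples N := by
  have href := (mem_formTriples.1 ht).2.hexReflect (by omega)
  refine mem_formTriples.2 ⟨fst_orient_pos fun hzero ↦ ?_, href.orient⟩
  have := hzero ▸ href.odd_fst (by omega)
  exact absurd this (by decide)

theorem swap_mem_formTriples {N : ℕ} {t : ℤ × ℤ × ℤ} (ht : t ∈ formTriples N) :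
    (t.1, t.2.2, t.2.1) ∈ formTriples N := by
  obtain ⟨hpos, hform⟩ := mem_formTriples.1 ht
  exact mem_formTriples.2 ⟨hpos, hform.trd_pos, hform.snd_pos, by rw [← hform.eq]; ring⟩

theorem card_formTriples_filter_swap {N : ℕ} (hN : N % 12 = 7) :
    #{t ∈ formTriples N | (t.1, t.2.2, t.2.1) = t} = #(formReps N) := by
  refine card_bij' (fun t _ ↦ (t.1.toNat, t.2.1.toNat)) (fun w _ ↦ (↑w.1, ↑w.2, ↑w.2))
    ?_ ?_ ?_ ?_
  · rintro ⟨x, y, z⟩ ht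
    simp only [mem_filter, mem_formTriples, Prod.mk.injEq, true_and] at ht
    obtain ⟨⟨hx, hy, -, heq⟩, rfl, -⟩ := ht
    rw [mem_formReps]
    zify
    rw [Int.toNat_of_nonneg hx.le, Int.toNat_of_nonneg hy.le, ← heq]
    ring
  · rintro ⟨u, v⟩ huv
    rw [mem_formReps] at huv
    have hu : u ≠ 0 := by rintro rfl; omega
    have hv : v ≠ 0 := by rintro rfl; omega
    simp only [mem_filter, mem_formTriples, and_true]
    refine ⟨by omega, by dsimp only; omega, by dsimp only; omega, ?_⟩
    rw [← huv]
    push_cast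
    ring
  · rintro ⟨x, y, z⟩ ht
    simp only [mem_filter, mem_formTriples, Prod.mk.injEq, true_and] at ht
    obtain ⟨⟨hx, hy, -, -⟩, rfl, -⟩ := ht
    simp only [Int.toNat_of_nonneg hx.le, Int.toNat_of_nonneg hy.le]
  · intro w _
    simp only [Int.toNat_natCast]

theorem three_mul_modEq_of_mul_mod_four {u v : ℕ} (h : u * v % 4 = 3) : 3 * u % 4 = v % 4 := by
  have hcancel : ∀ a b : ZMod 4, a * b = 3 → 3 * a = b := by decide
  refine (ZMod.natCast_eq_natCast_iff' _ _ 4).1 ?_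
  push_cast
  exact hcancel _ _ (by exact_mod_cast (ZMod.natCast_eq_natCast_iff' _ 3 4).2 h)

theorem card_formTriples_filter_fst_eq_snd {N : ℕ} (hN : N % 4 = 3) :
    #{t ∈ formTriples N | t.1 = t.2.1} = #{w ∈ N.divisorsAntidiagonal | 3 * w.1 < w.2} := by
  refine card_bij' (fun t _ ↦ (t.1.toNat, (3 * t.1 + 4 * t.2.2).toNat))
    (fun w _ ↦ (↑w.1, ↑w.1, (↑w.2 - 3 * ↑w.1) / 4)) ?_ ?_ ?_ ?_
  · rintro ⟨x, y, z⟩ ht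
    simp only [mem_filter, mem_formTriples] at ht
    obtain ⟨⟨hx, -, hz, heq⟩, rfl⟩ := ht
    dsimp only at hx hz heq
    simp only [mem_filter, Nat.mem_divisorsAntidiagonal]
    refine ⟨⟨?_, by omega⟩, by omega⟩
    zify
    rw [Int.toNat_of_nonneg hx.le, Int.toNat_of_nonneg (by omega), ← heq]
    ring
  · rintro ⟨u, v⟩ huv
    obtain ⟨huv, hlt⟩ := mem_filter.1 huv
    obtain ⟨rfl, hne⟩ := Nat.mem_divisorsAntidiagonal.1 huv
    have hu : u ≠ 0 := left_ne_zero_of_mul hne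
    have hmod := three_mul_modEq_of_mul_mod_four hN
    dsimp only at hlt
    simp only [mem_filter, mem_formTriples, and_true]
    refine ⟨by omega, by dsimp only; omega, by dsimp only; omega, ?_⟩
    have hdiv : 4 * (((v : ℤ) - 3 * u) / 4) = v - 3 * u := by omega
    push_cast
    linear_combination (u : ℤ) * hdiv
  · rintro ⟨x, y, z⟩ ht
    simp only [mem_filter, mem_formTriples] at ht
    obtain ⟨⟨hx, -, hz, -⟩, rfl⟩ := ht
    dsimp only at hx hz ⊢
    simp only [Prod.mk.injEq]
    omega
  · rintro ⟨u, v⟩ huv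
    obtain ⟨huv, hlt⟩ := mem_filter.1 huv
    have hmod := three_mul_modEq_of_mul_mod_four
      ((Nat.mem_divisorsAntidiagonal.1 huv).1.symm ▸ hN)
    dsimp only at hlt ⊢
    simp only [Prod.mk.injEq]
    omega

theorem card_formTriples_filter_snd_eq_two_mul_add {N : ℕ} (hN : N % 4 = 3) :
    #{t ∈ formTriples N | t.2.1 = 2 * t.1 + t.2.2} =
      #{w ∈ N.divisorsAntidiagonal | w.1 < w.2 ∧ w.2 < 3 * w.1} := by
  refine card_bij' (fun t _ ↦ ((t.1 + 2 * t.2.2).toNat, (3 * t.1 + 2 * t.2.2).toNat))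
    (fun w _ ↦ ((↑w.2 - ↑w.1) / 2, (↑w.2 - ↑w.1) + (3 * ↑w.1 - ↑w.2) / 4, (3 * ↑w.1 - ↑w.2) / 4))
    ?_ ?_ ?_ ?_
  · rintro ⟨x, y, z⟩ ht
    simp only [mem_filter, mem_formTriples] at ht
    obtain ⟨⟨hx, -, hz, heq⟩, rfl⟩ := ht
    dsimp only at hx hz heq
    simp only [mem_filter, Nat.mem_divisorsAntidiagonal]
    refine ⟨⟨?_, by omega⟩, by omega⟩
    zify
    rw [Int.toNat_of_nonneg (by omega), Int.toNat_of_nonneg (by omega), ← heq]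
    ring
  · rintro ⟨u, v⟩ huv
    obtain ⟨huv, hlt⟩ := mem_filter.1 huv
    obtain ⟨rfl, -⟩ := Nat.mem_divisorsAntidiagonal.1 huv
    have hmod := three_mul_modEq_of_mul_mod_four hN
    dsimp only at hlt
    simp only [mem_filter, mem_formTriples]
    obtain ⟨x, hx⟩ : ∃ x : ℤ, (v : ℤ) - u = 2 * x := ⟨(v - u) / 2, by omega⟩
    obtain ⟨z, hz⟩ : ∃ z : ℤ, 3 * (u : ℤ) - v = 4 * z := ⟨(3 * u - v) / 4, by omega⟩
    rw [hx, hz, Int.mul_ediv_cancel_left _ two_ne_zero, Int.mul_ediv_cancel_left _ four_ne_zero]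
    refine ⟨⟨by omega, by dsimp only; omega, by dsimp only; omega, ?_⟩, rfl⟩
    rw [Nat.cast_mul, show (u : ℤ) = x + 2 * z by omega, show (v : ℤ) = 3 * x + 2 * z by omega]
    ring
  · rintro ⟨x, y, z⟩ ht
    simp only [mem_filter, mem_formTriples] at ht
    obtain ⟨⟨hx, -, hz, -⟩, rfl⟩ := ht
    dsimp only at hx hz ⊢
    simp only [Prod.mk.injEq]
    omega
  · rintro ⟨u, v⟩ huv
    obtain ⟨huv, hlt⟩ := mem_filter.1 huv
    have hmod := three_mul_modEq_of_mul_mod_four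
      ((Nat.mem_divisorsAntidiagonal.1 huv).1.symm ▸ hN)
    dsimp only at hlt ⊢
    simp only [Prod.mk.injEq]
    omega

theorem card_formTriples_filter_hexInvolution {N : ℕ} (hN : N % 12 = 7) :
    #{t ∈ formTriples N | hexInvolution t = t} =
      #{w ∈ N.divisorsAntidiagonal | w.1 < w.2} := by
  have hfixed : {t ∈ formTriples N | hexInvolution t = t} =
      {t ∈ formTriples N | t.1 = t.2.1 ∨ t.2.1 = 2 * t.1 + t.2.2} :=
    filter_congr fun t ht ↦
      hexInvolution_eq_self_iff (mem_formTriples.1 ht).2 hN (mem_formTriples.1 ht).1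
  have hfactor : {w ∈ N.divisorsAntidiagonal | w.1 < w.2} =
      {w ∈ N.divisorsAntidiagonal | 3 * w.1 < w.2 ∨ w.1 < w.2 ∧ w.2 < 3 * w.1} := by
    refine filter_congr fun w hw ↦ ?_
    have hne : w.2 ≠ 3 * w.1 := by
      intro h
      have hmul := (Nat.mem_divisorsAntidiagonal.1 hw).1
      rw [h, Nat.mul_left_comm] at hmul
      omega
    omega
  rw [hfixed, hfactor, filter_or, filter_or, card_union_of_disjoint, card_union_of_disjoint,
    card_formTriples_filter_fst_eq_snd (by omega),
    card_formTriples_filter_snd_eq_two_mul_add (by omega)]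
  · exact disjoint_filter.2 fun w _ h ↦ by omega
  · refine disjoint_filter.2 fun t ht h ↦ ?_
    obtain ⟨hpos, hform⟩ := mem_formTriples.1 ht
    have := hform.trd_pos
    omega

theorem card_formReps_modEq {N : ℕ} (hN : N % 12 = 7) :
    #(formReps N) ≡ #{w ∈ N.divisorsAntidiagonal | w.1 < w.2} [MOD 2] := by
  rw [← card_formTriples_filter_swap hN, ← card_formTriples_filter_hexInvolution hN]
  exact (card_modEq_card_filter_fixed (fun _ ↦ swap_mem_formTriples) fun _ _ ↦ rfl).symm.trans
    (card_modEq_card_filter_fixed (fun _ ↦ hexInvolution_mem_formTriples hN) fun t ht ↦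
      hexInvolution_hexInvolution (mem_formTriples.1 ht).2 (by omega) (mem_formTriples.1 ht).1)

theorem odd_card_formReps_iff {N : ℕ} (hN : N % 12 = 7) :
    Odd #(formReps N) ↔
      ∃ p a c : ℕ, p.Prime ∧ 0 < c ∧ ¬ p ∣ c ∧ N = p ^ (4 * a + 1) * c ^ 2 := by
  have hsq : ¬ IsSquare N := by
    rintro ⟨r, rfl⟩
    have hne : ∀ a : ZMod 4, a * a ≠ 3 := by decide
    exact hne r (by exact_mod_cast (ZMod.natCast_eq_natCast_iff' (r * r) 3 4).2 (by omega))
  have hdivisors := card_divisors_eq_two_mul_add N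
  rw [card_divisorsAntidiagonal_filter_eq (by omega), if_neg hsq] at hdivisors
  rw [← card_divisors_mod_four_eq_two_iff (by omega), Nat.odd_iff, card_formReps_modEq hN]
  omega

end Involution

theorem stmt_16 (n : ℕ) :
    Odd (numRegularPartitions 8 n) ↔
      ∃ p a c : ℕ, p.Prime ∧ 0 < c ∧ ¬ p ∣ c ∧
        24 * n + 7 = p ^ (4 * a + 1) * c ^ 2 := by
  rw [← ZMod.natCast_eq_one_iff_odd, natCast_numRegularPartitions_eight,
    ZMod.natCast_eq_one_iff_odd, odd_card_formReps_iff (by omega)]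
end

section
/- For every natural number n, if n ≡ 21, 28, or 42 (mod 49), then the number of 8-regular partitions b_8(n) is even. -/
/-!
Write `E = ∏ (1 - q ^ i)` and `ψ = ∑ q ^ (k (k + 1) / 2)`. Modulo `2`, the generating function of
the `8`-regular partitions is `E ^ 7`, and Gauss' identity `E(q) ψ(q) = E(q²)²` becomes `ψ = E ^ 3`.
So `b₈` has generating function `E ψ²`, and since `E` and `ψ` are supported on generalized
pentagonal and triangular numbers, `b₈(n)` has the parity of the number of pairs `x, y ≥ 0` with
`x² + 6 y² = 24 n + 7`. If `n = 7 m`, the right-hand side is `7 u` with `u = 24 m + 1`. As `7` is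
the norm of `1 + √-6`, each solution of `x² + 6 y² = u` gives two solutions for `7 u`, through
multiplying `x ± y √-6` by `1 + √-6`. These are distinct and exhaust the solutions for `7 u` when
`7 ∤ u` and `u` is not a square.
-/

namespace RegularPartition

open Finset Filter PowerSeries PowerSeries.WithPiTopology Topology

/-! ### Shanks' finite form of Gauss' identity -/

section Shanks

variable {R : Type*} [CommRing R] (q : R)

/-- The finite `q`-Pochhammer symbol `(q; q²)ₙ`. -/
def oddProd (n : ℕ) : R := ∏ j ∈ range n, (1 - q ^ (2 * j + 1))

/-- The quotient `(q²; q²)ₙ / (q²; q²)ₛ` of finite `q`-Pochhammer symbols, written without division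
so that it makes sense in every commutative ring. -/
def evenProd (s n : ℕ) : R := ∏ j ∈ Ico s n, (1 - q ^ (2 * j + 2))

/-- Shanks' sum, a finite deformation of `(q²; q²)ₙ` that telescopes in `n`. -/
def shanksSum (n : ℕ) : R :=
  ∑ s ∈ range n, oddProd q s * evenProd q s n * q ^ (s * (2 * n + 1))

lemma oddProd_succ (n : ℕ) : oddProd q (n + 1) = oddProd q n * (1 - q ^ (2 * n + 1)) :=
  prod_range_succ _ n

lemma evenProd_self (n : ℕ) : evenProd q n n = 1 := by
  simp [evenProd]

lemma evenProd_succ_right {s n : ℕ} (h : s ≤ n) :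
    evenProd q s (n + 1) = evenProd q s n * (1 - q ^ (2 * n + 2)) :=
  prod_Ico_succ_top h _

lemma evenProd_eq_mul_evenProd_succ_left {s n : ℕ} (h : s < n) :
    evenProd q s n = (1 - q ^ (2 * s + 2)) * evenProd q (s + 1) n :=
  prod_eq_prod_Ico_succ_bot h _

lemma sum_range_shanks_telescope {m n : ℕ} (h : m ≤ n) :
    ∑ s ∈ range m, oddProd q s * evenProd q s n * q ^ (s * (2 * n + 1)) *
      ((1 - q ^ (2 * n + 2)) * q ^ (2 * s) - (1 - q ^ (2 * n + 1))) =
    (1 - q ^ (2 * m)) * oddProd q m * evenProd q m n * q ^ (m * (2 * n + 1)) := by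
  induction m with
  | zero => simp
  | succ m ih =>
    rw [sum_range_succ, ih (by lia), oddProd_succ, evenProd_eq_mul_evenProd_succ_left q h]
    ring

lemma shanksSum_succ (n : ℕ) :
    shanksSum q (n + 1) = (1 - q ^ (2 * n + 1)) * shanksSum q n +
      oddProd q (n + 1) * (q ^ (n * (2 * n + 1)) + q ^ ((n + 1) * (2 * n + 1))) := by
  have expansion : shanksSum q (n + 1) = ∑ s ∈ range (n + 1), oddProd q s * evenProd q s n *
      q ^ (s * (2 * n + 1)) * ((1 - q ^ (2 * n + 2)) * q ^ (2 * s)) := by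
    refine sum_congr rfl fun s hs => ?_
    rw [evenProd_succ_right q (mem_range_succ_iff.mp hs)]
    ring
  have telescope := sum_range_shanks_telescope q (le_refl n)
  simp only [mul_sub _ _ (1 - q ^ (2 * n + 1)), sum_sub_distrib, ← sum_mul] at telescope
  rw [← shanksSum, sub_eq_iff_eq_add] at telescope
  rw [expansion, sum_range_succ, telescope, oddProd_succ, evenProd_self]
  ring

theorem oddProd_mul_sum_pow_triangular (n : ℕ) :
    oddProd q n * ∑ k ∈ range (2 * n), q ^ (k * (k + 1) / 2) = shanksSum q n := by
  induction n with
  | zero => simp [shanksSum]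
  | succ n ih =>
    have triangular_even : 2 * n * (2 * n + 1) / 2 = n * (2 * n + 1) :=
      Nat.div_eq_of_eq_mul_right two_pos (by ring)
    have triangular_odd : (2 * n + 1) * (2 * n + 1 + 1) / 2 = (n + 1) * (2 * n + 1) :=
      Nat.div_eq_of_eq_mul_right two_pos (by ring)
    rw [shanksSum_succ, ← ih, Nat.mul_succ, sum_range_succ, sum_range_succ, triangular_even,
      triangular_odd, oddProd_succ]
    ring

lemma pow_dvd_shanksSum_sub_evenProd (n : ℕ) :
    q ^ (2 * n + 1) ∣ shanksSum q (n + 1) - evenProd q 0 (n + 1) := by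
  rw [shanksSum, sum_range_succ']
  simp only [oddProd, zero_mul, pow_zero, mul_one, range_zero, prod_empty, one_mul,
    add_sub_cancel_right]
  exact dvd_sum fun s _ => (pow_dvd_pow q (by nlinarith)).mul_left _

lemma oddProd_mul_evenProd (n : ℕ) :
    oddProd q n * evenProd q 0 n = ∏ j ∈ range (2 * n), (1 - q ^ (j + 1)) := by
  induction n with
  | zero => simp [oddProd, evenProd]
  | succ n ih =>
    rw [Nat.mul_succ, prod_range_succ, prod_range_succ, ← ih, oddProd_succ,
      evenProd_succ_right q n.zero_le]
    ring

theorem pow_dvd_prod_mul_sum_pow_triangular_sub (n : ℕ) :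
    q ^ (2 * n + 1) ∣
      (∏ j ∈ range (2 * (n + 1)), (1 - q ^ (j + 1))) *
        ∑ k ∈ range (2 * (n + 1)), q ^ (k * (k + 1) / 2) - evenProd q 0 (n + 1) ^ 2 := by
  rw [← oddProd_mul_evenProd, mul_right_comm, oddProd_mul_sum_pow_triangular, sq, ← sub_mul]
  exact (pow_dvd_shanksSum_sub_evenProd q n).mul_right _

end Shanks

/-! ### Gauss' identity for power series -/

section Gauss

lemma mem_range_triangular_iff {n : ℕ} :
    n ∈ Set.range (fun k : ℕ => k * (k + 1) / 2) ↔ IsSquare (8 * n + 1) := by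
  constructor
  · rintro ⟨k, rfl⟩
    have := Nat.mul_div_cancel' (Nat.even_mul_succ_self k).two_dvd
    exact ⟨2 * k + 1, by dsimp only; linarith⟩
  · rintro ⟨r, hr⟩
    obtain ⟨k, rfl⟩ : Odd r := by
      have : Odd (r * r) := hr ▸ ⟨4 * n, by ring⟩
      exact (Nat.odd_mul.mp this).1
    exact ⟨k, Nat.div_eq_of_eq_mul_right two_pos (by linarith)⟩

lemma triangular_injective : Function.Injective fun k : ℕ => k * (k + 1) / 2 := by
  refine (strictMono_nat_of_lt_succ fun k => ?_).injective
  have : (k + 1) * (k + 1 + 1) = k * (k + 1) + (k + 1) * 2 := by ring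
  simp only [this]
  lia

variable (R : Type*) [CommRing R]

/-- The generating function `∑ X ^ (k (k + 1) / 2)` of the triangular numbers, which are the `n`
for which `8 n + 1` is a square. -/
def triangularSeries : R⟦X⟧ :=
  PowerSeries.mk fun n => if IsSquare (8 * n + 1) then 1 else 0

theorem hasSum_triangularSeries [TopologicalSpace R] :
    HasSum (fun k : ℕ => (X : R⟦X⟧) ^ (k * (k + 1) / 2)) (triangularSeries R) := by
  rw [hasSum_iff_hasSum_coeff]
  intro n
  rw [triangularSeries, coeff_mk]
  simp only [coeff_X_pow]
  split_ifs with hn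
  · obtain ⟨k, rfl⟩ := mem_range_triangular_iff.mpr hn
    simp only [triangular_injective.eq_iff, eq_comm (a := k)]
    exact hasSum_ite_eq k 1
  · have not_triangular (k : ℕ) : n ≠ k * (k + 1) / 2 :=
      fun h => hn (mem_range_triangular_iff.mp ⟨k, h.symm⟩)
    simpa only [if_neg (not_triangular _)] using hasSum_zero

theorem continuous_expand [TopologicalSpace R] {p : ℕ} (hp : p ≠ 0) :
    Continuous (expand p hp : R⟦X⟧ → R⟦X⟧) := by
  refine continuous_iff_continuousAt.mpr fun f => ?_
  rw [ContinuousAt, tendsto_iff_coeff_tendsto]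
  intro n
  simp only [coeff_expand]
  split_ifs
  · exact (continuous_coeff R (n / p)).tendsto f
  · exact tendsto_const_nhds

theorem tendsto_evenProd [TopologicalSpace R] :
    Tendsto (fun n => evenProd (X : R⟦X⟧) 0 n) atTop
      (𝓝 (expand 2 two_ne_zero (pentagonalSeries R))) := by
  refine (((continuous_expand R two_ne_zero).tendsto _).comp
    (hasProd_one_sub_X_pow R).tendsto_prod_nat).congr fun n => ?_
  simp [evenProd, ← pow_mul, mul_add]

theorem pentagonalSeries_mul_triangularSeries :
    pentagonalSeries R * triangularSeries R = expand 2 two_ne_zero (pentagonalSeries R) ^ 2 := by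
  let _ : TopologicalSpace R := ⊥
  have _ : DiscreteTopology R := ⟨rfl⟩
  have shift : Tendsto (fun n : ℕ => n + 1) atTop atTop := tendsto_add_atTop_nat 1
  have shift_double : Tendsto (fun n : ℕ => 2 * (n + 1)) atTop atTop :=
    shift.const_mul_atTop' two_pos
  have limit_eq := (((hasProd_one_sub_X_pow R).tendsto_prod_nat.comp shift_double).mul
    ((hasSum_triangularSeries R).tendsto_sum_nat.comp shift_double)).sub
    (((tendsto_evenProd R).comp shift).pow 2)
  have limit_zero : Tendsto (fun n => (∏ j ∈ range (2 * (n + 1)), (1 - (X : R⟦X⟧) ^ (j + 1))) *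
      ∑ k ∈ range (2 * (n + 1)), X ^ (k * (k + 1) / 2) - evenProd X 0 (n + 1) ^ 2)
      atTop (𝓝 0) := by
    rw [tendsto_iff_coeff_tendsto]
    refine fun d => tendsto_atTop_of_eventually_const (i₀ := d) fun n hn => ?_
    rw [map_zero]
    exact X_pow_dvd_iff.mp (pow_dvd_prod_mul_sum_pow_triangular_sub X n) d (by lia)
  exact sub_eq_zero.mp (tendsto_nhds_unique limit_eq limit_zero)

end Gauss

/-! ### Generating functions modulo a prime -/

section PrimeModulus

lemma isUnit_pentagonalSeries (R : Type*) [CommRing R] : IsUnit (pentagonalSeries R) := by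
  rw [isUnit_iff_constantCoeff, ← coeff_zero_eq_constantCoeff_apply]
  simpa [pentagonal_def] using congrArg IsUnit (coeff_pentagonalSeries_pentagonal R 0)

theorem expand_zmod_eq_pow (p : ℕ) [hp : Fact p.Prime] (f : (ZMod p)⟦X⟧) :
    expand p hp.out.ne_zero f = f ^ p := by
  have := MvPowerSeries.map_frobenius_expand p hp.out.ne_zero (f := f)
  rwa [ZMod.frobenius_zmod, MvPowerSeries.map_id] at this

lemma numRegularPartitions_eq_card_restricted (m n : ℕ) :
    numRegularPartitions m n = #(Nat.Partition.restricted n (¬ m ∣ ·)) := by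
  rw [numRegularPartitions, Nat.card_eq_fintype_card, Fintype.card_subtype,
    Nat.Partition.restricted]

theorem hasProd_mk_numRegularPartitions (R : Type*) [CommRing R] [TopologicalSpace R] [T2Space R]
    {m : ℕ} (hm : 0 < m) :
    HasProd (fun i => ∑ j ∈ range m, X ^ ((i + 1) * j))
      (PowerSeries.mk fun n => (numRegularPartitions m n : R)) := by
  simpa only [numRegularPartitions_eq_card_restricted,
    Nat.Partition.card_restricted_eq_card_countRestricted _ hm] using
    Nat.Partition.hasProd_powerSeriesMk_card_countRestricted R hm

theorem mk_numRegularPartitions_prime_pow (R : Type*) [CommRing R] (p k : ℕ) [hp : Fact p.Prime]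
    [CharP R p] :
    (PowerSeries.mk fun n => (numRegularPartitions (p ^ k) n : R)) =
      pentagonalSeries R ^ (p ^ k - 1) := by
  let _ : TopologicalSpace R := ⊥
  have _ : DiscreteTopology R := ⟨rfl⟩
  have _ : CharP R⟦X⟧ p := charP_of_injective_algebraMap C_injective p
  have hpk : 0 < p ^ k := pow_pos hp.out.pos k
  have geom_mul (i : ℕ) : (∑ j ∈ range (p ^ k), (X : R⟦X⟧) ^ ((i + 1) * j)) * (1 - X ^ (i + 1)) =
      (1 - X ^ (i + 1)) ^ p ^ k := by
    simp only [pow_mul]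
    rw [geom_sum_mul_neg, sub_pow_char_pow, one_pow]
  have product := (hasProd_mk_numRegularPartitions R hpk).mul (hasProd_one_sub_X_pow R)
  simp only [geom_mul] at product
  refine (isUnit_pentagonalSeries R).mul_right_cancel ?_
  rw [pow_sub_one_mul hpk.ne']
  exact product.unique ((hasProd_one_sub_X_pow R).pow _)

end PrimeModulus

/-! ### The binary quadratic form `x² + d y²` -/

section QuadraticForm

/-- The representations of `N` by the form `x² + d y²` with `x, y ≥ 0`. The bound `y ≤ N` is
automatic for `d > 0` and keeps the set finite. -/
def representations (d N : ℕ) : Finset (ℕ × ℕ) :=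
  {v ∈ range (N + 1) ×ˢ range (N + 1) | v.1 ^ 2 + d * v.2 ^ 2 = N}

variable {d : ℕ}

lemma mem_representations (hd : 0 < d) {N x y : ℕ} :
    (x, y) ∈ representations d N ↔ x ^ 2 + d * y ^ 2 = N := by
  simp only [representations, mem_filter, mem_product, mem_range, Nat.lt_succ_iff,
    and_iff_right_iff_imp]
  intro h
  constructor <;> nlinarith [Nat.le_self_pow two_ne_zero x, Nat.le_self_pow two_ne_zero y]

lemma dvd_norm_of_dvd_add {a b : ℤ} (h : (d + 1 : ℤ) ∣ a + b) :
    (d + 1 : ℤ) ∣ a ^ 2 + d * b ^ 2 := by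
  obtain ⟨t, ht⟩ := h
  exact ⟨b ^ 2 + (a - b) * t, by linear_combination (a - b) * ht⟩

lemma eq_of_natAbs_eq_of_not_dvd_add (hp : (d + 1).Prime) (hd : d ≠ 1) {a b a' b' : ℤ}
    (ha : 0 < a) (ha' : 0 < a') (not_dvd : ¬ (d + 1 : ℤ) ∣ a' + b')
    (re_eq : (a - d * b).natAbs = (a' - d * b').natAbs)
    (im_eq : (a + b).natAbs = (a' + b').natAbs) : a = a' ∧ b = b' := by
  have not_dvd_two_mul : ¬ (d + 1 : ℤ) ∣ 2 * (a' + b') := by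
    have prime : Prime (d + 1 : ℤ) := mod_cast Nat.prime_iff_prime_int.mp hp
    refine fun h => (prime.dvd_or_dvd h).elim (fun h2 => hd ?_) not_dvd
    have : d + 1 ∣ 2 := mod_cast h2
    simpa using (Nat.prime_dvd_prime_iff_eq hp Nat.prime_two).mp this
  rcases Int.natAbs_eq_natAbs_iff.mp re_eq with re | re <;>
    rcases Int.natAbs_eq_natAbs_iff.mp im_eq with im | im
  · have hb : b = b' := mul_left_cancel₀ (by positivity : (d + 1 : ℤ) ≠ 0)
      (by linear_combination im - re)
    exact ⟨by linear_combination im - hb, hb⟩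
  · exact absurd ⟨a + a' + 2 * b', by linear_combination -re - d * im⟩ not_dvd_two_mul
  · exact absurd ⟨a' + 2 * b' - a, by linear_combination re + d * im⟩ not_dvd_two_mul
  · have : (d + 1 : ℤ) * a = -((d + 1) * a') := by linear_combination re + d * im
    nlinarith

lemma exists_nonneg_of_norm_eq_prime_mul (hp : (d + 1).Prime) {u x y : ℕ}
    (h : x ^ 2 + d * y ^ 2 = (d + 1) * u) :
    ∃ a b : ℤ, 0 ≤ a ∧ a ^ 2 + d * b ^ 2 = u ∧ (a - d * b).natAbs = x ∧ (a + b).natAbs = y := by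
  have prime : Prime (d + 1 : ℤ) := mod_cast Nat.prime_iff_prime_int.mp hp
  replace h : (x ^ 2 + d * y ^ 2 : ℤ) = (d + 1) * u := mod_cast h
  obtain ⟨z, hz, t, ht⟩ : ∃ z : ℤ, z.natAbs = y ∧ (d + 1 : ℤ) ∣ x - z := by
    have : (d + 1 : ℤ) ∣ (x - y) * (x + y) := ⟨u - y ^ 2, by linear_combination h⟩
    rcases prime.dvd_or_dvd this with hxy | hxy
    · exact ⟨y, by simp, hxy⟩
    · exact ⟨-y, by simp, by rwa [sub_neg_eq_add]⟩
  obtain rfl : z = x - (d + 1) * t := by linear_combination -ht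
  have norm_eq : (x - d * t : ℤ) ^ 2 + d * t ^ 2 = u := by
    have hy : ((x - (d + 1) * t) ^ 2 : ℤ) = y ^ 2 := by rw [← hz, Int.natAbs_sq]
    exact mul_left_cancel₀ prime.ne_zero (by linear_combination h + d * hy)
  rcases le_total 0 (x - d * t : ℤ) with hx | hx
  · exact ⟨x - d * t, -t, hx, by rwa [neg_sq], by grind, by grind⟩
  · exact ⟨-(x - d * t), t, by lia, by rwa [neg_sq], by grind, by grind⟩

/-- The coordinates, up to sign, of the product of `1 + √-d` with `a + ε b√-d`, for a sign `ε`. As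
`1 + √-d` has norm `d + 1`, this turns a representation of `u` into one of `(d + 1) u`. -/
def mulOneAddSqrt (d : ℕ) (v : (ℕ × ℕ) × ℤˣ) : ℕ × ℕ :=
  ((v.1.1 - d * (v.2 * v.1.2) : ℤ).natAbs, (v.1.1 + v.2 * v.1.2 : ℤ).natAbs)

lemma mapsTo_mulOneAddSqrt (hd : 0 < d) (u : ℕ) :
    Set.MapsTo (mulOneAddSqrt d) (representations d u ×ˢ univ : Finset ((ℕ × ℕ) × ℤˣ))
      (representations d ((d + 1) * u)) := by
  rintro ⟨⟨a, b⟩, ε⟩ hv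
  have norm_eq := (mem_product.mp hv).1
  rw [mulOneAddSqrt, mem_coe]
  rw [mem_representations hd] at norm_eq ⊢
  have ε_sq : (ε : ℤ) ^ 2 = 1 := Int.isUnit_sq ε.isUnit
  zify at norm_eq ⊢
  simp only [sq_abs]
  linear_combination (d + 1 : ℤ) * norm_eq + (d + 1) * d * b ^ 2 * ε_sq

lemma injOn_mulOneAddSqrt (hp : (d + 1).Prime) (hd : d ≠ 1) {u : ℕ} (hu : ¬ d + 1 ∣ u)
    (not_sq : ¬ IsSquare u) (not_mul_sq : ∀ b, u ≠ d * b ^ 2) :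
    Set.InjOn (mulOneAddSqrt d) (representations d u ×ˢ univ : Finset ((ℕ × ℕ) × ℤˣ)) := by
  have pos_of_norm_eq {a b : ℕ} (h : a ^ 2 + d * b ^ 2 = u) : 0 < a ∧ 0 < b := by
    constructor <;> refine Nat.pos_of_ne_zero ?_ <;> rintro rfl
    · exact not_mul_sq b (by simpa using h.symm)
    · exact not_sq ⟨a, by simpa [sq] using h.symm⟩
  have mem_iff {a b : ℕ} {ε : ℤˣ} : ((a, b), ε) ∈ representations d u ×ˢ univ ↔
      a ^ 2 + d * b ^ 2 = u := by
    rw [mem_product, and_iff_left (mem_univ _), mem_representations (by have := hp.two_le; lia)]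
  rintro ⟨⟨a, b⟩, ε⟩ hv ⟨⟨a', b'⟩, ε'⟩ hv' heq
  obtain ⟨ha, hb⟩ := pos_of_norm_eq (mem_iff.mp hv)
  obtain ⟨ha', -⟩ := pos_of_norm_eq (mem_iff.mp hv')
  have not_dvd : ¬ (d + 1 : ℤ) ∣ a' + ε' * b' := fun h => hu <| by
    have ε'_sq : (ε' : ℤ) ^ 2 = 1 := Int.isUnit_sq ε'.isUnit
    have := dvd_norm_of_dvd_add h
    rw [mul_pow, ε'_sq, one_mul] at this
    exact mem_iff.mp hv' ▸ mod_cast this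
  obtain ⟨re_eq, im_eq⟩ := Prod.mk.inj heq
  obtain ⟨a_eq, b_eq⟩ := eq_of_natAbs_eq_of_not_dvd_add hp hd (by lia) (by lia) not_dvd
    re_eq im_eq
  rcases Int.units_eq_one_or ε with rfl | rfl <;>
    rcases Int.units_eq_one_or ε' with rfl | rfl <;>
    simp only [Units.val_one, Units.val_neg, Prod.mk.injEq, and_true] at b_eq ⊢ <;> lia

lemma surjOn_mulOneAddSqrt (hp : (d + 1).Prime) (u : ℕ) :
    Set.SurjOn (mulOneAddSqrt d) (representations d u ×ˢ univ : Finset ((ℕ × ℕ) × ℤˣ))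
      (representations d ((d + 1) * u)) := by
  have hd : 0 < d := by have := hp.two_le; lia
  rintro ⟨x, y⟩ hxy
  obtain ⟨a, b, ha, norm_eq, re_eq, im_eq⟩ :=
    exists_nonneg_of_norm_eq_prime_mul hp ((mem_representations hd).mp hxy)
  obtain ⟨ε, hε⟩ : ∃ ε : ℤˣ, ε * (b.natAbs : ℤ) = b := by
    rcases b.natAbs_eq with hb | hb
    · exact ⟨1, by simpa using hb.symm⟩
    · exact ⟨-1, by simpa using hb.symm⟩
  refine ⟨((a.natAbs, b.natAbs), ε), mem_product.mpr
    ⟨(mem_representations hd).mpr ?_, mem_univ ε⟩, ?_⟩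
  · zify
    simpa only [sq_abs] using norm_eq
  · simp only [mulOneAddSqrt, hε, Int.natAbs_of_nonneg ha, re_eq, im_eq]

theorem card_representations_prime_mul (hp : (d + 1).Prime) (hd : d ≠ 1) {u : ℕ}
    (hu : ¬ d + 1 ∣ u) (not_sq : ¬ IsSquare u) (not_mul_sq : ∀ b, u ≠ d * b ^ 2) :
    #(representations d ((d + 1) * u)) = 2 * #(representations d u) := by
  rw [← card_nbij (mulOneAddSqrt d) (mapsTo_mulOneAddSqrt (by have := hp.two_le; lia) u)
    (injOn_mulOneAddSqrt hp hd hu not_sq not_mul_sq) (surjOn_mulOneAddSqrt hp u), card_product,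
    card_univ, Fintype.card_units_int, mul_comm]

end QuadraticForm

/-! ### Parity of the number of `8`-regular partitions -/

section ModTwo

lemma mem_range_pentagonal_iff {n : ℕ} : n ∈ Set.range pentagonal ↔ IsSquare (24 * n + 1) := by
  constructor
  · rintro ⟨k, rfl⟩
    refine ⟨(6 * k - 1).natAbs, ?_⟩
    zify
    rw [abs_mul_abs_self]
    linear_combination 12 * two_mul_natCast_pentagonal k
  · rintro ⟨r, hr⟩
    have pentagonal_eq {k : ℤ} (hk : (6 * k - 1) ^ 2 = (r : ℤ) ^ 2) : pentagonal k = n := by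
      zify at hr ⊢
      linarith [two_mul_natCast_pentagonal k]
    have residue : r % 6 = 1 ∨ r % 6 = 5 := by
      have : r % 6 * (r % 6) % 6 = 1 := by rw [← Nat.mul_mod, ← hr]; lia
      have : r % 6 < 6 := Nat.mod_lt r (by simp)
      interval_cases r % 6 <;> simp_all
    rcases residue with h | h
    · exact ⟨-(r / 6), pentagonal_eq (by rw [← neg_sq]; congr 1; lia)⟩
    · exact ⟨r / 6 + 1, pentagonal_eq (by congr 1; lia)⟩

lemma coeff_pentagonalSeries_zmod_two (n : ℕ) :
    (pentagonalSeries (ZMod 2)).coeff n = if IsSquare (24 * n + 1) then 1 else 0 := by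
  split_ifs with h
  · obtain ⟨k, rfl⟩ := mem_range_pentagonal_iff.mpr h
    rw [coeff_pentagonalSeries_pentagonal]
    rcases Int.units_eq_one_or k.negOnePow with hk | hk <;> rw [hk] <;> decide
  · exact coeff_pentagonalSeries_eq_zero _ (mt mem_range_pentagonal_iff.mp h)

lemma isSquare_four_mul_add_one_iff {n : ℕ} :
    IsSquare (4 * n + 1) ↔ 2 ∣ n ∧ IsSquare (8 * (n / 2) + 1) := by
  have eight_mul_half (h : 2 ∣ n) : 8 * (n / 2) = 4 * n := by lia
  refine ⟨fun hn => ?_, fun ⟨h, hn⟩ => eight_mul_half h ▸ hn⟩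
  suffices 2 ∣ n from ⟨this, (eight_mul_half this).symm ▸ hn⟩
  obtain ⟨r, hr⟩ := hn
  obtain ⟨k, rfl⟩ : Odd r := by
    have : Odd (r * r) := hr ▸ ⟨2 * n, by ring⟩
    exact (Nat.odd_mul.mp this).1
  have : n = k * (k + 1) := by linarith
  exact this ▸ (Nat.even_mul_succ_self k).two_dvd

lemma coeff_triangularSeries_sq_zmod_two (n : ℕ) :
    (triangularSeries (ZMod 2) ^ 2).coeff n = if IsSquare (4 * n + 1) then 1 else 0 := by
  rw [← expand_zmod_eq_pow, coeff_expand, triangularSeries, coeff_mk, ← ite_and]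
  simp only [isSquare_four_mul_add_one_iff]

theorem triangularSeries_zmod_two :
    triangularSeries (ZMod 2) = pentagonalSeries (ZMod 2) ^ 3 := by
  refine (isUnit_pentagonalSeries _).mul_left_cancel ?_
  rw [pentagonalSeries_mul_triangularSeries, expand_zmod_eq_pow]
  ring

theorem mk_numRegularPartitions_eight :
    (PowerSeries.mk fun n => (numRegularPartitions 8 n : ZMod 2)) =
      pentagonalSeries (ZMod 2) * triangularSeries (ZMod 2) ^ 2 := by
  rw [triangularSeries_zmod_two, show 8 = 2 ^ 3 from rfl, mk_numRegularPartitions_prime_pow _ 2 3]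
  ring

lemma mod_eq_one_of_sq_add_six_mul_sq {n x y : ℕ} (h : x ^ 2 + 6 * y ^ 2 = 24 * n + 7) :
    x ^ 2 % 24 = 1 ∧ y ^ 2 % 4 = 1 := by
  have residues : ∀ x y : ZMod 24, x ^ 2 + 6 * y ^ 2 = 7 → x ^ 2 = 1 := by decide
  have hx : x ^ 2 % 24 = 1 := by
    have := residues x y (by
      have : ((24 * n + 7 : ℕ) : ZMod 24) = 7 := by
        rw [Nat.cast_add, Nat.cast_mul, ZMod.natCast_self 24, zero_mul, zero_add]; rfl
      exact_mod_cast h ▸ this)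
    exact (ZMod.natCast_eq_natCast_iff' (x ^ 2) 1 24).mp (mod_cast this)
  exact ⟨hx, by lia⟩

-- `24 n + 7 = (24 a + 1) + 6 (4 b + 1)` for `a + b = n`.
lemma card_filter_antidiagonal_isSquare (n : ℕ) :
    #{v ∈ antidiagonal n | IsSquare (24 * v.1 + 1) ∧ IsSquare (4 * v.2 + 1)} =
      #(representations 6 (24 * n + 7)) := by
  refine card_nbij' (fun v => ((24 * v.1 + 1).sqrt, (4 * v.2 + 1).sqrt))
    (fun v => (v.1 ^ 2 / 24, v.2 ^ 2 / 4)) ?_ ?_ ?_ ?_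
  · rintro ⟨a, b⟩ hv
    obtain ⟨hn, ⟨r, hr⟩, s, hs⟩ := mem_filter.mp hv
    rw [HasAntidiagonal.mem_antidiagonal] at hn
    simp only [hr, hs, Nat.sqrt_eq, mem_coe, mem_representations (d := 6) (by simp)]
    lia
  · rintro ⟨x, y⟩ hv
    rw [mem_coe, mem_representations (by simp)] at hv
    obtain ⟨hx, hy⟩ := mod_eq_one_of_sq_add_six_mul_sq hv
    exact mem_filter.mpr ⟨HasAntidiagonal.mem_antidiagonal.mpr (by lia), ⟨x, by lia⟩, ⟨y, by lia⟩⟩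
  · rintro ⟨a, b⟩ hv
    obtain ⟨-, ⟨r, hr⟩, s, hs⟩ := mem_filter.mp hv
    simp only [hr, hs, Nat.sqrt_eq, Prod.mk.injEq]
    lia
  · rintro ⟨x, y⟩ hv
    rw [mem_coe, mem_representations (by simp)] at hv
    obtain ⟨hx, hy⟩ := mod_eq_one_of_sq_add_six_mul_sq hv
    have x_sq : 24 * (x ^ 2 / 24) + 1 = x ^ 2 := by lia
    have y_sq : 4 * (y ^ 2 / 4) + 1 = y ^ 2 := by lia
    simp only [x_sq, y_sq, Nat.sqrt_eq']

theorem even_numRegularPartitions_eight_iff (n : ℕ) :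
    Even (numRegularPartitions 8 n) ↔ Even #(representations 6 (24 * n + 7)) := by
  have coeff_eq := congrArg (coeff n) mk_numRegularPartitions_eight
  simp only [coeff_mk, coeff_mul, coeff_pentagonalSeries_zmod_two,
    coeff_triangularSeries_sq_zmod_two, ite_zero_mul_ite_zero, mul_one, sum_boole,
    card_filter_antidiagonal_isSquare] at coeff_eq
  rw [← ZMod.natCast_eq_zero_iff_even, coeff_eq, ZMod.natCast_eq_zero_iff_even]

end ModTwo

lemma not_isSquare_of_mod_seven {u : ℕ} (h : u % 7 = 3 ∨ u % 7 = 5 ∨ u % 7 = 6) :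
    ¬ IsSquare u := by
  rintro ⟨r, rfl⟩
  have : r % 7 < 7 := Nat.mod_lt r (by simp)
  rw [Nat.mul_mod] at h
  interval_cases r % 7 <;> simp at h

end RegularPartition

theorem stmt_19_general (m : ℕ) (not_sq : ¬ IsSquare (24 * m + 1)) (not_dvd : ¬ 7 ∣ 24 * m + 1) :
    Even (numRegularPartitions 8 (7 * m)) := by
  rw [RegularPartition.even_numRegularPartitions_eight_iff,
    show 24 * (7 * m) + 7 = (6 + 1) * (24 * m + 1) by ring,
    RegularPartition.card_representations_prime_mul (by norm_num) (by norm_num) not_dvd not_sq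
      (by lia)]
  exact even_two_mul _

theorem stmt_19 (n : ℕ) (h : n % 49 = 21 ∨ n % 49 = 28 ∨ n % 49 = 42) :
    Even (numRegularPartitions 8 n) := by
  obtain ⟨m, rfl⟩ : 7 ∣ n := by lia
  exact stmt_19_general m (RegularPartition.not_isSquare_of_mod_seven (by lia)) (by lia)
end
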